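/- A well-formed complete history H of read/write register operations is linearizable if and only if, for every register x, the register subhistory H|x is linearizable. -/

import Mathlib

/-- An event of a read/write register operation execution: it is either the
invocation (`isInv = true`) or the response (`isInv = false`) of an operation,
identified by an operation identifier `op`, occurring at process `proc`,
targeting register `reg`.  `isRead` tells whether the operation is a read or a
write, and `value` is the value written (for a write) resp. returned (for a
read). -/
structure Event where
  op : ℕ
  proc : ℕ
  reg : ℕ
  isRead : Bool
  value : ℤ
  isInv : Bool
deriving DecidableEq

/-- A history is a finite sequence of events. -/
abbrev Hist := List Event

/-- `H|p`: the process subhistory of `H`, i.e. the subsequence of events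
occurring at process `p`. -/
def procSub (H : Hist) (p : ℕ) : Hist := H.filter (fun e => e.proc = p)

/-- `H|x`: the register subhistory of `H`, i.e. the subsequence of events of
operations targeting register `x`. -/
def regSub (H : Hist) (x : ℕ) : Hist := H.filter (fun e => e.reg = x)

/-- `e2` is the response event matching the invocation event `e1`. -/
def Matches (e1 e2 : Event) : Prop :=
  e1.isInv = true ∧ e2.isInv = false ∧ e1.op = e2.op ∧ e1.proc = e2.proc ∧
    e1.reg = e2.reg ∧ e1.isRead = e2.isRead ∧ e1.value = e2.value

/-- A history is sequential if its first event is an invocation and every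
invocation event (except possibly the last event) is immediately followed by
the matching response event. -/
inductive IsSequential : Hist → Prop
  | nil : IsSequential []
  | single (e : Event) : e.isInv = true → IsSequential [e]
  | cons (e1 e2 : Event) (rest : Hist) :
      Matches e1 e2 → IsSequential rest → IsSequential (e1 :: e2 :: rest)

/-- No two distinct events of a history are the invocation of the same
operation, nor the response of the same operation. -/
def UniqueEvents (H : Hist) : Prop :=
  H.Pairwise (fun e1 e2 => ¬(e1.op = e2.op ∧ e1.isInv = e2.isInv))

/-- All events of one and the same operation agree on the process, register,
operation type and value. -/
def Coherent (H : Hist) : Prop :=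
  ∀ e1 ∈ H, ∀ e2 ∈ H, e1.op = e2.op →
    e1.proc = e2.proc ∧ e1.reg = e2.reg ∧ e1.isRead = e2.isRead ∧ e1.value = e2.value

/-- A history is well-formed if every process subhistory is sequential
(together with the bookkeeping conditions making operations well-defined). -/
def WellFormed (H : Hist) : Prop :=
  UniqueEvents H ∧ Coherent H ∧ ∀ p : ℕ, IsSequential (procSub H p)

/-- A history is complete if every invocation event has a matching response
event. -/
def Complete (H : Hist) : Prop :=
  ∀ e ∈ H, e.isInv = true → ∃ e' ∈ H, Matches e e'

/-- `H ≃ H'`: two histories are equivalent iff `H|p = H'|p` for every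
process `p`. -/
def HEquiv (H H' : Hist) : Prop := ∀ p : ℕ, procSub H p = procSub H' p

/-- Operation `o1` precedes operation `o2` in history `H`
(`o1 <_H o2`): the response event of `o1` occurs before the invocation event
of `o2` in `H`. -/
def OpBefore (H : Hist) (o1 o2 : ℕ) : Prop :=
  ∃ i j : Fin H.length, i < j ∧
    (H.get i).op = o1 ∧ (H.get i).isInv = false ∧
    (H.get j).op = o2 ∧ (H.get j).isInv = true

/-- A sequential history is legal if every read of a register returns the
value written by the closest preceding write to that register, or the initial
value `0` if no such write exists. -/
def Legal (S : Hist) : Prop :=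
  ∀ k : Fin S.length, (S.get k).isInv = true → (S.get k).isRead = true →
    ((∃ j : Fin S.length, j < k ∧ (S.get j).isInv = true ∧ (S.get j).isRead = false ∧
        (S.get j).reg = (S.get k).reg ∧ (S.get j).value = (S.get k).value ∧
        ∀ l : Fin S.length, j < l → l < k → (S.get l).isInv = true →
          (S.get l).isRead = false → (S.get l).reg ≠ (S.get k).reg) ∨
      ((S.get k).value = 0 ∧
        ∀ j : Fin S.length, j < k → (S.get j).isInv = true →
          (S.get j).isRead = false → (S.get j).reg ≠ (S.get k).reg))

/-- `SC H`: history `H` is sequentially consistent iff there is a legal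
sequential history `S` with `S ≃ H`. -/
def SC (H : Hist) : Prop :=
  ∃ S : Hist, IsSequential S ∧ Legal S ∧ HEquiv S H

/-- `LIN H`: history `H` is linearizable iff there is a legal sequential
history `S` with `S ≃ H` such that `o1 <_H o2` implies `o1 <_S o2` for all
operations `o1, o2` of `H`. -/
def LIN (H : Hist) : Prop :=
  ∃ S : Hist, IsSequential S ∧ Legal S ∧ HEquiv S H ∧
    ∀ o1 o2 : ℕ, OpBefore H o1 o2 → OpBefore S o1 o2

namespace LinAux

/-- The response event matching an invocation. -/
def rsp (e : Event) : Event := { e with isInv := false }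

/-- Expansion of a list of invocations to a sequential history. -/
def expand (L : Hist) : Hist := L.flatMap (fun e => [e, rsp e])

lemma matches_iff (a b : Event) : Matches a b ↔ a.isInv = true ∧ b = rsp a := by
  cases a; cases b; simp [Matches, rsp]; grind

lemma expand_nil : expand [] = [] := rfl

lemma expand_cons (a : Event) (L : Hist) : expand (a :: L) = a :: rsp a :: expand L := rfl

lemma expand_append (L M : Hist) : expand (L ++ M) = expand L ++ expand M := by
  simp [expand]

lemma rsp_inj {a b : Event} (ha : a.isInv = true) (hb : b.isInv = true) (h : rsp a = rsp b) :
    a = b := by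
  cases a; cases b; simp_all [rsp]

lemma mem_expand {L : Hist} {e : Event} : e ∈ expand L ↔ ∃ a ∈ L, e = a ∨ e = rsp a := by
  simp [expand]

lemma seq_expand (L : Hist) (h : ∀ a ∈ L, a.isInv = true) : IsSequential (expand L) := by
  induction L with
  | nil => exact .nil
  | cons a L ih =>
    rw [expand_cons]
    exact .cons _ _ _ ((matches_iff _ _).2 ⟨h a (by simp), rfl⟩) (ih fun b hb => h b (by simp [hb]))

lemma seq_cases {S : Hist} (h : IsSequential S) :
    ∃ L : Hist, (∀ a ∈ L, a.isInv = true) ∧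
      (S = expand L ∨ ∃ e : Event, e.isInv = true ∧ S = expand L ++ [e]) := by
  induction h with
  | nil => exact ⟨[], by simp, Or.inl rfl⟩
  | single e he => exact ⟨[], by simp, Or.inr ⟨e, he, rfl⟩⟩
  | cons a b rest hm _ ih =>
    obtain ⟨L, hL, h⟩ := ih
    obtain ⟨ha, rfl⟩ := (matches_iff _ _).1 hm
    refine ⟨a :: L, by simpa [ha] using hL, ?_⟩
    rcases h with rfl | ⟨e, he, rfl⟩
    · exact Or.inl rfl
    · exact Or.inr ⟨e, he, rfl⟩

lemma seq_complete {S : Hist} (h : IsSequential S) (hn : S.Nodup)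
    (hc : ∀ e ∈ S, e.isInv = true → rsp e ∈ S) :
    ∃ L : Hist, (∀ a ∈ L, a.isInv = true) ∧ S = expand L := by
  obtain ⟨L, hL, rfl | ⟨e, he, rfl⟩⟩ := seq_cases h
  · exact ⟨L, hL, rfl⟩
  · exfalso
    have h1 := hc e (by simp) he
    have h2 : rsp e ∈ expand L := by
      rcases List.mem_append.1 h1 with h | h
      · exact h
      · rw [List.mem_singleton] at h
        rw [← h] at he
        simp [rsp] at he
    obtain ⟨a, ha, h | h⟩ := mem_expand.1 h2
    · have := hL a ha
      rw [← h] at this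
      simp [rsp] at this
    · have := rsp_inj he (hL a ha) h
      subst this
      have h3 : e ∈ expand L := mem_expand.2 ⟨e, ha, Or.inl rfl⟩
      rw [List.nodup_append] at hn
      exact hn.2.2 e h3 e (by simp) rfl

lemma filter_inv_expand (L : Hist) (h : ∀ a ∈ L, a.isInv = true) :
    (expand L).filter (fun e => e.isInv) = L := by
  induction L with
  | nil => rfl
  | cons a L ih =>
    have := h a (by simp)
    rw [expand_cons, List.filter_cons_of_pos (by simpa using this),
      List.filter_cons_of_neg (by simp [rsp]), ih fun b hb => h b (by simp [hb])]

lemma filter_expand (L : Hist) (q : Event → Bool) (h : ∀ a, q (rsp a) = q a) :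
    (expand L).filter q = expand (L.filter q) := by
  induction L with
  | nil => rfl
  | cons a L ih =>
    rw [expand_cons]
    by_cases hq : q a = true
    · rw [List.filter_cons_of_pos hq, List.filter_cons_of_pos (by rw [h]; exact hq), ih,
        List.filter_cons_of_pos hq, expand_cons]
    · rw [List.filter_cons_of_neg hq, List.filter_cons_of_neg (by rw [h]; exact hq), ih,
        List.filter_cons_of_neg hq]

lemma pair_sub_expand {L : Hist} {a b : Event} (h : List.Sublist [a, b] L) :
    List.Sublist [rsp a, b] (expand L) := by
  induction L with
  | nil => simp at h
  | cons c L ih =>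
    rw [expand_cons]
    cases h with
    | cons _ h => exact ((ih h).cons _).cons _
    | cons_cons _ h =>
      refine List.Sublist.cons _ (List.Sublist.cons_cons _ ?_)
      rw [List.singleton_sublist] at h ⊢
      exact mem_expand.2 ⟨b, h, Or.inl rfl⟩

lemma pair_sub_of_expand {L : Hist} (hL : ∀ a ∈ L, a.isInv = true) {a b : Event}
    (ha : a.isInv = true) (hb : b.isInv = true)
    (h : List.Sublist [rsp a, b] (expand L)) : List.Sublist [a, b] L := by
  induction L with
  | nil => simp [expand] at h
  | cons c L ih =>
    have hc := hL c (by simp)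
    have hL' : ∀ a ∈ L, a.isInv = true := fun b hb => hL b (by simp [hb])
    rw [expand_cons, List.sublist_cons_iff] at h
    rcases h with h | ⟨r, h, _⟩
    · rw [List.sublist_cons_iff] at h
      rcases h with h | ⟨r, h, h'⟩
      · exact (ih hL' h).cons _
      · obtain ⟨h1, rfl⟩ := List.cons.inj h
        obtain rfl := rsp_inj ha hc h1
        refine List.Sublist.cons_cons _ ?_
        rw [List.singleton_sublist] at h' ⊢
        obtain ⟨d, hd, rfl | rfl⟩ := mem_expand.1 h'
        · exact hd
        · simp [rsp] at hb
    · obtain ⟨h1, rfl⟩ := List.cons.inj h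
      rw [← h1] at hc
      simp [rsp] at hc

lemma opBefore_iff (S : Hist) (o1 o2 : ℕ) : OpBefore S o1 o2 ↔
    ∃ a b : Event, List.Sublist [a, b] S ∧ a.op = o1 ∧ a.isInv = false ∧ b.op = o2 ∧
      b.isInv = true := by
  constructor
  · rintro ⟨i, j, hij, h1, h2, h3, h4⟩
    refine ⟨S.get i, S.get j, ?_, h1, h2, h3, h4⟩
    rw [List.sublist_iff_exists_fin_orderEmbedding_get_eq]
    refine ⟨OrderEmbedding.ofStrictMono ![i, j] ?_, ?_⟩
    · intro x y hxy
      fin_cases x <;> fin_cases y <;> simp_all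
    · intro x
      fin_cases x <;> rfl
  · rintro ⟨a, b, h, h1, h2, h3, h4⟩
    rw [List.sublist_iff_exists_fin_orderEmbedding_get_eq] at h
    obtain ⟨f, hf⟩ := h
    have ha : a = S.get (f ⟨0, by simp⟩) := hf ⟨0, by simp⟩
    have hb : b = S.get (f ⟨1, by simp⟩) := hf ⟨1, by simp⟩
    refine ⟨f ⟨0, by simp⟩, f ⟨1, by simp⟩, f.strictMono (by simp), ?_⟩
    rw [← ha, ← hb]
    exact ⟨h1, h2, h3, h4⟩

lemma pair_sub_filter {α : Type*} {L : List α} {q : α → Bool} {a b : α} :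
    List.Sublist [a, b] (L.filter q) ↔ List.Sublist [a, b] L ∧ q a = true ∧ q b = true := by
  constructor
  · intro h
    refine ⟨h.trans List.filter_sublist, ?_, ?_⟩
    · exact (List.mem_filter.1 (h.subset (by simp))).2
    · exact (List.mem_filter.1 (h.subset (by simp))).2
  · rintro ⟨h, ha, hb⟩
    simpa [List.filter_cons, ha, hb] using h.filter q

lemma pair_antisymm {α : Type*} {L : List α} (hn : L.Nodup) {a b : α}
    (h : List.Sublist [a, b] L) (h' : List.Sublist [b, a] L) : False := by
  induction L with
  | nil => simp at h
  | cons c L ih =>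
    rw [List.nodup_cons] at hn
    cases h with
    | cons _ h =>
      cases h' with
      | cons _ h' => exact ih hn.2 h h'
      | cons_cons _ h' => exact hn.1 (h.subset (by simp))
    | cons_cons _ h =>
      cases h' with
      | cons _ h' => exact hn.1 (h'.subset (by simp))
      | cons_cons _ h' => exact hn.1 (h'.subset (by simp))

lemma pair_idx [DecidableEq α] {L : List α} (hn : L.Nodup) {a b : α} (ha : a ∈ L) (hb : b ∈ L) :
    L.idxOf a < L.idxOf b ↔ List.Sublist [a, b] L := by
  induction L with
  | nil => simp at ha
  | cons c L ih =>
    rw [List.nodup_cons] at hn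
    rw [List.sublist_cons_iff]
    by_cases hca : c = a <;> by_cases hcb : c = b <;>
      simp_all [List.idxOf_cons_self, List.idxOf_cons_ne]
    · intro h
      exact hn.1 (h.subset (by simp))
    · grind
    · intro h
      exact hn.1 (h.subset (by simp))
    · grind

lemma pair_of_lt {α : Type*} {L : List α} {t : α → ℕ} (hp : L.Pairwise (fun a b => t a ≤ t b))
    {a b : α} (ha : a ∈ L) (hb : b ∈ L) (h : t a < t b) : List.Sublist [a, b] L := by
  induction L with
  | nil => simp at ha
  | cons c L ih =>
    rw [List.pairwise_cons] at hp
    rcases List.mem_cons.1 ha with rfl | ha'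
    · rcases List.mem_cons.1 hb with rfl | hb
      · omega
      · exact List.Sublist.cons_cons _ (List.singleton_sublist.2 hb)
    · rcases List.mem_cons.1 hb with rfl | hb
      · have := hp.1 a ha'
        omega
      · exact (ih hp.2 ha' hb).cons _

lemma exists_time {α : Type*} [DecidableEq α] (f : α → ℕ) (L : List α) (hn : L.Nodup) :
    ∃ t : α → ℕ, L.Pairwise (fun a b => t a ≤ t b) ∧ (∀ a ∈ L, f a ≤ t a) ∧
      ∀ a ∈ L, ∃ b ∈ L, t a = f b ∧ (b = a ∨ List.Sublist [b, a] L) := by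
  induction L with
  | nil => exact ⟨f, by simp, by simp, by simp⟩
  | cons c L ih =>
    rw [List.nodup_cons] at hn
    obtain ⟨t, h1, h2, h3⟩ := ih hn.2
    have hne : ∀ a ∈ L, a ≠ c := fun a ha h => hn.1 (h ▸ ha)
    refine ⟨fun a => if a = c then f c else max (f c) (t a), ?_, ?_, ?_⟩
    · rw [List.pairwise_cons]
      refine ⟨fun a ha => by simp [hne a ha], ?_⟩
      refine h1.imp_of_mem fun {a b} ha hb h => ?_
      simp only [hne a ha, hne b hb, if_false]
      omega
    · intro a ha
      rcases List.mem_cons.1 ha with rfl | ha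
      · simp
      · have := h2 a ha
        simp only [hne a ha, if_false]
        omega
    · intro a ha
      rcases List.mem_cons.1 ha with rfl | ha
      · exact ⟨a, by simp, by simp, Or.inl rfl⟩
      · simp only [hne a ha, if_false]
        rcases le_total (f c) (t a) with h | h
        · obtain ⟨b, hb, e, hs⟩ := h3 a ha
          refine ⟨b, by simp [hb], by omega, ?_⟩
          exact hs.imp id fun h => h.cons _
        · exact ⟨c, by simp, by omega, Or.inr (List.Sublist.cons_cons _ (List.singleton_sublist.2 ha))⟩

lemma filter_lt_append {α : Type*} {t : α → ℕ} {L : List α}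
    (hp : L.Pairwise (fun a b => t a ≤ t b)) (n : ℕ) :
    L.filter (fun a => t a < n) ++ L.filter (fun a => t a = n) =
      L.filter (fun a => t a < n + 1) := by
  induction L with
  | nil => rfl
  | cons c L ih =>
    rw [List.pairwise_cons] at hp
    have ih := ih hp.2
    rcases lt_trichotomy (t c) n with h | h | h
    · rw [List.filter_cons_of_pos (by simpa using h), List.filter_cons_of_neg (by simp; omega),
        List.filter_cons_of_pos (by simp; omega), List.cons_append, ih]
    · have h0 : L.filter (fun a => t a < n) = [] := by
        rw [List.filter_eq_nil_iff]
        intro a ha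
        have := hp.1 a ha
        simp; omega
      rw [h0] at ih
      rw [List.filter_cons_of_neg (by simp; omega), h0, List.filter_cons_of_pos (by simpa using h),
        List.filter_cons_of_pos (by simp; omega), ← ih]
      rfl
    · rw [List.filter_cons_of_neg (by simp; omega), List.filter_cons_of_neg (by simp; omega),
        List.filter_cons_of_neg (by simp; omega), ih]

lemma flatMap_range {α : Type*} {t : α → ℕ} {L : List α}
    (hp : L.Pairwise (fun a b => t a ≤ t b)) (n : ℕ) :
    (List.range n).flatMap (fun i => L.filter (fun a => t a = i)) =
      L.filter (fun a => t a < n) := by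
  induction n with
  | zero => simp
  | succ n ih => rw [List.range_succ, List.flatMap_append, ih, ← filter_lt_append hp]; simp

lemma perm_of_filter {f : Event → ℕ} {A B : Hist}
    (h : ∀ x, (A.filter (fun e => f e = x)).Perm (B.filter (fun e => f e = x))) : A.Perm B := by
  rw [List.perm_iff_count]
  intro a
  have := (List.perm_iff_count.1 (h (f a))) a
  rwa [List.count_filter (by simp), List.count_filter (by simp)] at this

/-- Value of register `r` after the history `A`. -/
def lastVal (A : Hist) (r : ℕ) : ℤ :=
  (((A.filter (fun e => e.isInv && !e.isRead && decide (e.reg = r))).getLast?).map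
    Event.value).getD 0

lemma lastVal_concat (A : Hist) (e : Event) (r : ℕ) : lastVal (A ++ [e]) r =
    if e.isInv = true ∧ e.isRead = false ∧ e.reg = r then e.value else lastVal A r := by
  unfold lastVal
  split_ifs with h
  · simp [List.filter_append, List.filter_cons, h]
  · rw [List.filter_append, List.filter_cons_of_neg (by simpa [and_assoc] using h)]
    simp

lemma lastVal_iff (A : Hist) (r : ℕ) (v : ℤ) : lastVal A r = v ↔
    ((∃ j, ∃ hj : j < A.length, A[j].isInv = true ∧ A[j].isRead = false ∧ A[j].reg = r ∧
        A[j].value = v ∧ ∀ l, ∀ hl : l < A.length, j < l → A[l].isInv = true →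
          A[l].isRead = false → A[l].reg ≠ r) ∨
      (v = 0 ∧ ∀ j, ∀ hj : j < A.length, A[j].isInv = true → A[j].isRead = false →
        A[j].reg ≠ r)) := by
  induction A using List.reverseRecOn with
  | nil => simp [lastVal]; exact eq_comm
  | append_singleton A e ih =>
    rw [lastVal_concat]
    have hlast : ∀ h : A.length < (A ++ [e]).length, (A ++ [e])[A.length] = e := by simp
    have hlt : ∀ j (hj : j < A.length) (h : j < (A ++ [e]).length), (A ++ [e])[j] = A[j] := by
      intro j hj h
      rw [List.getElem_append_left hj]
    have hlen : (A ++ [e]).length = A.length + 1 := by simp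
    split_ifs with h
    · constructor
      · rintro rfl
        refine Or.inl ⟨A.length, by simp, ?_⟩
        rw [hlast]
        refine ⟨h.1, h.2.1, h.2.2, rfl, ?_⟩
        intro l hl hl'
        omega
      · rintro (⟨j, hj, h1, h2, h3, h4, h5⟩ | ⟨_, h5⟩)
        · by_cases hjA : j < A.length
          · exfalso
            have := h5 A.length (by omega) hjA
            rw [hlast] at this
            exact this h.1 h.2.1 h.2.2
          · obtain rfl : j = A.length := by omega
            rw [hlast] at h4
            exact h4
        · exfalso
          have := h5 A.length (by omega)
          rw [hlast] at this
          exact this h.1 h.2.1 h.2.2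
    · rw [ih]
      constructor
      · rintro (⟨j, hj, h1, h2, h3, h4, h5⟩ | ⟨h0, h5⟩)
        · refine Or.inl ⟨j, by omega, ?_⟩
          rw [hlt j hj]
          refine ⟨h1, h2, h3, h4, ?_⟩
          intro l hl hjl
          by_cases hlA : l < A.length
          · rw [hlt l hlA]
            exact h5 l hlA hjl
          · obtain rfl : l = A.length := by omega
            rw [hlast]
            exact fun a b c => h ⟨a, b, c⟩
        · refine Or.inr ⟨h0, ?_⟩
          intro l hl
          by_cases hlA : l < A.length
          · rw [hlt l hlA]
            exact h5 l hlA
          · obtain rfl : l = A.length := by omega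
            rw [hlast]
            exact fun a b c => h ⟨a, b, c⟩
      · rintro (⟨j, hj, h1, h2, h3, h4, h5⟩ | ⟨h0, h5⟩)
        · have hjA : j < A.length := by
            by_contra hjA
            obtain rfl : j = A.length := by omega
            rw [hlast] at h1 h2 h3
            exact h ⟨h1, h2, h3⟩
          rw [hlt j hjA] at h1 h2 h3 h4
          refine Or.inl ⟨j, hjA, h1, h2, h3, h4, ?_⟩
          intro l hl hjl
          have := h5 l (by omega) hjl
          rwa [hlt l hl] at this
        · refine Or.inr ⟨h0, ?_⟩
          intro l hl
          have := h5 l (by omega)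
          rwa [hlt l hl] at this

lemma legal_iff (S : Hist) : Legal S ↔ ∀ A k B, S = A ++ k :: B → k.isInv = true →
    k.isRead = true → lastVal A k.reg = k.value := by
  have key : ∀ A k B, S = A ++ k :: B → ∀ hk : A.length < S.length, S[A.length] = k ∧
      ∀ j (hj : j < A.length), S[j] = A[j] := by
    rintro A k B rfl hk
    refine ⟨by simp, fun j hj => ?_⟩
    rw [List.getElem_append_left hj]
  constructor
  · intro h A k B hS hk1 hk2
    have hlen : A.length < S.length := by simp [hS]
    obtain ⟨e1, e2⟩ := key A k B hS hlen
    have := h ⟨A.length, hlen⟩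
    simp only [List.get_eq_getElem, e1] at this
    rw [lastVal_iff]
    rcases this hk1 hk2 with ⟨j, hj, h1, h2, h3, h4, h5⟩ | ⟨h0, h5⟩
    · have hj' : j.1 < A.length := hj
      rw [e2 _ hj'] at h1 h2 h3 h4
      refine Or.inl ⟨j.1, hj', h1, h2, h3, h4, ?_⟩
      intro l hl hjl
      have := h5 ⟨l, by omega⟩ hjl hl
      simpa only [e2 l hl] using this
    · refine Or.inr ⟨h0, ?_⟩
      intro l hl
      have := h5 ⟨l, by omega⟩ hl
      simpa only [e2 l hl] using this
  · intro h k hk1 hk2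
    have hS : S = S.take k.1 ++ S.get k :: S.drop (k.1 + 1) := by simp
    have hA : (S.take k.1).length = k.1 := by simp
    have := h _ _ _ hS hk1 hk2
    have e2 : ∀ j (hj : j < (S.take k.1).length), (S.take k.1)[j] = S[j]'(by omega) := by
      intro j hj
      simp
    rw [lastVal_iff] at this
    rcases this with ⟨j, hj, h1, h2, h3, h4, h5⟩ | ⟨h0, h5⟩
    · rw [e2 _ hj] at h1 h2 h3 h4
      refine Or.inl ⟨⟨j, by omega⟩, by simpa [Fin.lt_def] using hA ▸ hj, h1, h2, h3, h4, ?_⟩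
      intro l hjl hl
      have := h5 l.1 (by rw [hA]; exact hl) hjl
      rw [e2] at this
      exact this
    · refine Or.inr ⟨h0, ?_⟩
      intro l hl
      have := h5 l.1 (by rw [hA]; exact hl)
      rw [e2] at this
      exact this

lemma lastVal_regSub (A : Hist) (x : ℕ) : lastVal (regSub A x) x = lastVal A x := by
  unfold lastVal regSub
  rw [List.filter_filter]
  congr 4
  funext e
  cases e.isInv <;> cases e.isRead <;> by_cases h : e.reg = x <;> simp [h]

lemma legal_regSub {S : Hist} (h : Legal S) (x : ℕ) : Legal (regSub S x) := by
  rw [legal_iff] at h ⊢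
  intro A k B hS h1 h2
  have hk : k.reg = x := by
    have : k ∈ regSub S x := by rw [hS]; simp
    simpa using (List.mem_filter.1 this).2
  obtain ⟨S1, S2, rfl, rfl, h3⟩ := List.filter_eq_append_iff.1 hS
  obtain ⟨T1, T2, rfl, h4, _, _⟩ := List.filter_eq_cons_iff.1 h3
  have := h (S1 ++ T1) k T2 (by simp) h1 h2
  rw [← this, hk, ← lastVal_regSub (S1 ++ T1)]
  have e : regSub (S1 ++ T1) x = regSub S1 x := by
    unfold regSub
    rw [List.filter_append, List.filter_eq_nil_iff.2 h4, List.append_nil]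
  rw [e]
  exact lastVal_regSub S1 x ▸ rfl

lemma legal_of_regSub {S : Hist} (h : ∀ x, Legal (regSub S x)) : Legal S := by
  rw [legal_iff]
  rintro A k B rfl h1 h2
  have := (legal_iff _).1 (h k.reg) (regSub A k.reg) k (regSub B k.reg) (by simp [regSub]) h1 h2
  rwa [lastVal_regSub] at this

lemma seq_regSub {S : Hist} (h : IsSequential S) (x : ℕ) : IsSequential (regSub S x) := by
  induction h with
  | nil => exact .nil
  | single e he =>
    unfold regSub
    by_cases hx : e.reg = x
    · simpa [List.filter_cons, hx] using IsSequential.single e he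
    · simpa [List.filter_cons, hx] using IsSequential.nil
  | cons a b rest hm _ ih =>
    have hab : a.reg = b.reg := hm.2.2.2.2.1
    unfold regSub at ih ⊢
    by_cases hx : a.reg = x
    · rw [List.filter_cons_of_pos (by simpa using hx),
        List.filter_cons_of_pos (by simpa [← hab] using hx)]
      exact .cons _ _ _ hm ih
    · rw [List.filter_cons_of_neg (by simpa using hx),
        List.filter_cons_of_neg (by simpa [← hab] using hx)]
      exact ih

lemma perm_of_equiv {S H : Hist} (h : HEquiv S H) : S.Perm H :=
  perm_of_filter (f := Event.proc) fun p => by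
    have := h p
    unfold procSub at this
    rw [this]

lemma filter_comm' (S : Hist) (p q : Event → Bool) :
    (S.filter p).filter q = (S.filter q).filter p := by
  rw [List.filter_filter, List.filter_filter]
  congr 1
  funext e
  exact Bool.and_comm _ _

lemma forward {H : Hist} (hwf : WellFormed H) (h : LIN H) (x : ℕ) : LIN (regSub H x) := by
  obtain ⟨S, h1, h2, h3, h4⟩ := h
  have hp := perm_of_equiv h3
  refine ⟨regSub S x, seq_regSub h1 x, legal_regSub h2 x, ?_, ?_⟩
  · intro p
    have := h3 p
    unfold procSub regSub at *
    rw [filter_comm', this, filter_comm']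
  · intro o1 o2 h
    rw [opBefore_iff] at h
    obtain ⟨a, b, hs, ha, ha', hb, hb'⟩ := h
    obtain ⟨hs, hax, hbx⟩ := pair_sub_filter.1 hs
    have h5 := h4 o1 o2 ((opBefore_iff _ _ _).2 ⟨a, b, hs, ha, ha', hb, hb'⟩)
    rw [opBefore_iff] at h5 ⊢
    obtain ⟨c, d, hs', hc, hc', hd, hd'⟩ := h5
    refine ⟨c, d, pair_sub_filter.2 ⟨hs', ?_, ?_⟩, hc, hc', hd, hd'⟩
    · have := (hwf.2.1 a (hs.subset (by simp)) c (hp.subset (hs'.subset (by simp)))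
        (ha.trans hc.symm)).2.1
      rw [← this]; exact hax
    · have := (hwf.2.1 b (hs.subset (by simp)) d (hp.subset (hs'.subset (by simp)))
        (hb.trans hd.symm)).2.1
      rw [← this]; exact hbx

lemma pw_forall {α : Type*} {r : α → α → Prop} {l : List α} (hp : l.Pairwise r)
    (hs : ∀ a b, r a b → r b a) {a b : α} (ha : a ∈ l) (hb : b ∈ l) (hne : a ≠ b) : r a b := by
  induction l with
  | nil => simp at ha
  | cons c l ih =>
    rw [List.pairwise_cons] at hp
    rcases List.mem_cons.1 ha with h1 | h1 <;> rcases List.mem_cons.1 hb with h2 | h2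
    · exact absurd (h1.trans h2.symm) hne
    · rw [h1]; exact hp.1 b h2
    · rw [h2]; exact hs _ _ (hp.1 a h1)
    · exact ih hp.2 h1 h2

lemma uniq_eq {H : Hist} (hu : UniqueEvents H) {a b : Event} (ha : a ∈ H) (hb : b ∈ H)
    (ho : a.op = b.op) (hi : a.isInv = b.isInv) : a = b := by
  by_contra hne
  exact pw_forall hu (fun a b h h' => h ⟨h'.1.symm, h'.2.symm⟩) ha hb hne ⟨ho, hi⟩

lemma nodup_of_uniq {H : Hist} (hu : UniqueEvents H) : H.Nodup :=
  List.Pairwise.imp (fun {a b} h e => h ⟨by rw [e], by rw [e]⟩) hu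

lemma backward {H : Hist} (hwf : WellFormed H) (hcom : Complete H)
    (h : ∀ x, LIN (regSub H x)) : LIN H := by
  obtain ⟨hu, hcoh, hseq⟩ := hwf
  have hnd := nodup_of_uniq hu
  have hc : ∀ e ∈ H, e.isInv = true → rsp e ∈ H := by
    intro e he hi
    obtain ⟨e', he', hm⟩ := hcom e he hi
    rwa [← ((matches_iff _ _).1 hm).2]
  -- process subhistories
  have hP : ∀ p, ∃ L : Hist, (∀ a ∈ L, a.isInv = true) ∧ procSub H p = expand L := by
    intro p
    refine seq_complete (hseq p) (hnd.filter _) ?_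
    intro e he hi
    obtain ⟨he, hp⟩ := List.mem_filter.1 he
    exact List.mem_filter.2 ⟨hc e he hi, hp⟩
  choose P hPi hPe using hP
  have hPsub : ∀ p, List.Sublist (expand (P p)) H := fun p => by
    rw [← hPe p]; exact List.filter_sublist
  -- register linearizations
  choose S hS1 hS2 hS3 hS4 using h
  have hSp : ∀ x, (S x).Perm (regSub H x) := fun x => perm_of_equiv (hS3 x)
  have hL : ∀ x, ∃ L : Hist, (∀ a ∈ L, a.isInv = true) ∧ S x = expand L := by
    intro x
    refine seq_complete (hS1 x) ((hSp x).nodup_iff.2 (hnd.filter _)) ?_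
    intro e he hi
    rw [(hSp x).mem_iff] at he ⊢
    obtain ⟨he, hp⟩ := List.mem_filter.1 he
    exact List.mem_filter.2 ⟨hc e he hi, hp⟩
  choose L hLi hLe using hL
  have hLp : ∀ x, (L x).Perm ((H.filter (fun e => e.isInv)).filter (fun e => e.reg = x)) := by
    intro x
    have := (hSp x).filter (fun e => e.isInv)
    rw [hLe, filter_inv_expand _ (hLi x)] at this
    unfold regSub at this
    rwa [filter_comm'] at this
  have hLm : ∀ x a, a ∈ L x ↔ a ∈ H ∧ a.isInv = true ∧ a.reg = x := by
    intro x a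
    rw [(hLp x).mem_iff]
    simp only [List.mem_filter, decide_eq_true_eq, and_assoc]
  have hLn : ∀ x, (L x).Nodup := fun x => (hLp x).nodup_iff.2 ((hnd.filter _).filter _)
  have ht := fun x => exists_time (fun e => H.idxOf e) (L x) (hLn x)
  choose T hT1 hT2 hT3 using ht
  let t : Event → ℕ := fun a => T a.reg a
  have ht1 : ∀ x, (L x).Pairwise (fun a b => t a ≤ t b) := by
    intro x
    refine (hT1 x).imp_of_mem fun {a b} ha hb h => ?_
    show T a.reg a ≤ T b.reg b
    rw [((hLm x a).1 ha).2.2, ((hLm x b).1 hb).2.2]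
    exact h
  have ht2 : ∀ a ∈ H, a.isInv = true → H.idxOf a ≤ t a := fun a ha hi =>
    hT2 a.reg a ((hLm _ _).2 ⟨ha, hi, rfl⟩)
  have ht3 : ∀ a ∈ H, a.isInv = true → ∃ b ∈ H, b.isInv = true ∧ b.reg = a.reg ∧
      t a = H.idxOf b ∧ (b = a ∨ List.Sublist [b, a] (L a.reg)) := by
    intro a ha hi
    obtain ⟨b, hb, h1, h2⟩ := hT3 a.reg a ((hLm _ _).2 ⟨ha, hi, rfl⟩)
    obtain ⟨h3, h4, h5⟩ := (hLm _ _).1 hb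
    exact ⟨b, h3, h4, h5, h1, h2⟩
  -- real-time order is respected by the linearization points
  have hlt : ∀ a c, a ∈ H → a.isInv = true → c.isInv = true → List.Sublist [rsp a, c] H →
      t a < t c := by
    intro a c ha hai hci hs
    have hcH : c ∈ H := hs.subset (by simp)
    have hrH : rsp a ∈ H := hs.subset (by simp)
    obtain ⟨b, hb, hbi, hbr, e, hor⟩ := ht3 a ha hai
    have h1 := (pair_idx hnd hrH hcH).2 hs
    have h2 := ht2 c hcH hci
    have h3 : ¬ H.idxOf (rsp a) < H.idxOf b := by
      intro hlt
      have hsub := (pair_idx hnd hrH hb).1 hlt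
      have hob : OpBefore (regSub H a.reg) a.op b.op := by
        rw [opBefore_iff]
        exact ⟨rsp a, b, pair_sub_filter.2 ⟨hsub, by simp [rsp], by simpa using hbr⟩, rfl, rfl,
          rfl, hbi⟩
      have := hS4 _ _ _ hob
      rw [opBefore_iff] at this
      obtain ⟨u, v, huv, hu1, hu2, hv1, hv2⟩ := this
      have huH : u ∈ H := (List.mem_filter.1 ((hSp _).subset (huv.subset (by simp)))).1
      have hvH : v ∈ H := (List.mem_filter.1 ((hSp _).subset (huv.subset (by simp)))).1
      obtain rfl : u = rsp a := uniq_eq hu huH hrH hu1 hu2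
      obtain rfl : v = b := uniq_eq hu hvH hb hv1 (hv2.trans hbi.symm)
      rw [hLe] at huv
      have hab := pair_sub_of_expand (hLi _) hai hbi huv
      rcases hor with rfl | hor
      · exact pair_antisymm (hLn _) hab hab
      · exact pair_antisymm (hLn _) hab hor
    omega
  -- the combined order
  let R : ℕ → ℕ := fun i => ((H[i]?).map Event.reg).getD 0
  have hR : ∀ b ∈ H, R (H.idxOf b) = b.reg := by
    intro b hb
    have : H[H.idxOf b]? = some b := by
      rw [List.getElem?_eq_getElem (List.idxOf_lt_length_iff.2 hb)]
      simp
    simp [R, this]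
  let M : Hist := (List.range H.length).flatMap (fun i => (L (R i)).filter (fun a => t a = i))
  have hMreg : ∀ x, M.filter (fun e => e.reg = x) = L x := by
    intro x
    have e1 : M.filter (fun e => e.reg = x) =
        (List.range H.length).flatMap (fun i => (L x).filter (fun a => t a = i)) := by
      show ((List.range H.length).flatMap _).filter _ = _
      rw [List.filter_flatMap]
      congr 1
      funext i
      by_cases hx : R i = x
      · rw [hx, List.filter_eq_self]
        intro a ha
        simpa using ((hLm _ _).1 (List.mem_filter.1 ha).1).2.2
      · rw [List.filter_eq_nil_iff.2, List.filter_eq_nil_iff.2]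
        · intro a ha hti
          obtain ⟨h1, h2, h3⟩ := (hLm _ _).1 ha
          obtain ⟨b, hb, _, h4, h5, _⟩ := ht3 a h1 h2
          apply hx
          have hti : t a = i := by simpa using hti
          rw [← hti, h5, hR b hb, h4, h3]
        · intro a ha hti
          apply hx
          have hti : a.reg = x := by simpa using hti
          rw [← hti]
          exact ((hLm _ _).1 (List.mem_filter.1 ha).1).2.2.symm
    rw [e1, flatMap_range (ht1 x), List.filter_eq_self]
    intro a ha
    obtain ⟨h1, h2, h3⟩ := (hLm _ _).1 ha
    obtain ⟨b, hb, _, h4, h5, _⟩ := ht3 a h1 h2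
    rw [h5]
    simpa using List.idxOf_lt_length_iff.2 hb
  have hMt : M.Pairwise (fun a b => t a ≤ t b) := by
    show List.Pairwise _ ((List.range H.length).flatMap _)
    rw [List.pairwise_flatMap]
    refine ⟨fun i _ => (ht1 _).filter _, ?_⟩
    refine List.pairwise_lt_range.imp fun {i j} hij a ha b hb => ?_
    have ha : t a = i := by simpa using (List.mem_filter.1 ha).2
    have hb : t b = j := by simpa using (List.mem_filter.1 hb).2
    omega
  have hMp : M.Perm (H.filter (fun e => e.isInv)) :=
    perm_of_filter (f := Event.reg) fun x => by rw [hMreg]; exact hLp x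
  have hMm : ∀ a, a ∈ M ↔ a ∈ H ∧ a.isInv = true := by
    intro a
    rw [hMp.mem_iff]
    simp
  refine ⟨expand M, seq_expand _ fun a ha => ((hMm a).1 ha).2, ?_, ?_, ?_⟩
  · apply legal_of_regSub
    intro x
    unfold regSub
    rw [filter_expand _ _ (fun _ => rfl), hMreg, ← hLe]
    exact hS2 x
  · intro p
    rw [hPe p]
    unfold procSub
    rw [filter_expand _ _ (fun _ => rfl)]
    congr 1
    have hpt : (P p).Pairwise (fun a b => t a < t b) := by
      rw [List.pairwise_iff_forall_sublist]
      intro a b hab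
      have haP : a ∈ P p := hab.subset (by simp)
      have hbP : b ∈ P p := hab.subset (by simp)
      refine hlt a b ((hPsub p).subset (mem_expand.2 ⟨a, haP, Or.inl rfl⟩)) (hPi p a haP)
        (hPi p b hbP) ((pair_sub_expand hab).trans (hPsub p))
    have hperm : (M.filter (fun e => e.proc = p)).Perm (P p) := by
      have := hMp.filter (fun e => e.proc = p)
      have e := filter_inv_expand _ (hPi p)
      rw [← hPe p] at e
      unfold procSub at e
      rw [filter_comm'] at e
      rwa [e] at this
    refine List.Perm.eq_of_pairwise (le := fun a b => t a ≤ t b) ?_ (hMt.filter _)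
      (hpt.imp fun h => h.le) hperm
    intro a b ha hb h1 h2
    have ha := hperm.subset ha
    by_contra hne
    have := pw_forall (r := fun a b => t a ≠ t b) (hpt.imp fun h => h.ne) (fun a b h => h.symm) ha hb hne
    omega
  · intro o1 o2 ho
    rw [opBefore_iff] at ho ⊢
    obtain ⟨u, c, hs, h1, h2, h3, h4⟩ := ho
    have huH : u ∈ H := hs.subset (by simp)
    have hcH : c ∈ H := hs.subset (by simp)
    have hup : u ∈ expand (P u.proc) := by
      rw [← hPe]
      exact List.mem_filter.2 ⟨huH, by simp⟩
    obtain ⟨a, ha, rfl | rfl⟩ := mem_expand.1 hup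
    · rw [hPi _ _ ha] at h2
      cases h2
    · have hai := hPi _ _ ha
      have haH : a ∈ H := (hPsub _).subset (mem_expand.2 ⟨a, ha, Or.inl rfl⟩)
      have := hlt a c haH hai h4 hs
      exact ⟨rsp a, c, pair_sub_expand (pair_of_lt hMt ((hMm a).2 ⟨haH, hai⟩)
        ((hMm c).2 ⟨hcH, h4⟩) this), h1, h2, h3, h4⟩

end LinAux

/-- A well-formed complete history `H` of read/write register
operations is linearizable if and only if, for every register `x`, the
register subhistory `H|x` is linearizable. -/
theorem lin_compositional (H : Hist) (hwf : WellFormed H) (hcom : Complete H) :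
    LIN H ↔ ∀ x : ℕ, LIN (regSub H x) := by
  exact ⟨fun h x => LinAux.forward hwf h x, LinAux.backward hwf hcom⟩
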